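/- arXiv:1001.0960 — 6 statements merged into one kernel-verified Lean document; each statement's English description precedes it below -/
import Mathlib

section
/- Suppose Assumptions A1 and A3 hold with slackness δ > 0, V > 0, all initial queue backlogs are zero, and a C(t)-approximate policy is run with C(t) ≤ C + Vε_V + Σ_l Z_l(t)ε_Z + Σ_k Q_k(t)ε_Q + Σ_m |H_m(t)|ε_H, where ε_Q < δ, ε_H < δ, and ε_Z + ε_H Σ_{m=1}^M β_{l,m} < δ for all l. Then for any designated time t_end > 0, the time averages over the first t_end slots satisfy: ȳ_l + g_l(x̄) ≤ (VC₃/(θ t_end))[1 + Σ_{m=1}^M β_{l,m}] for all l ∈ {1,…,L}; ā_k ≤ b̄_k + VC₃/(θ t_end) for all k ∈ {1,…,K}; and there exists ε ∈ ℝ^M with |ε_m| ≤ VC₃/(θ t_end) for all m such that x̄ + ε ∈ X; where θ = min[δ − ε_Q, δ − ε_H, (δ − ε_Z − ε_H β_sum)/(1 + β_sum)] with β_sum = max_l Σ_m β_{l,m}, and C₃ = √(D₁ + D₂ + D₃) with D₁ = [(B+C)/V + (y₀^max − y₀^min) + (f^max − f^min) + ε_V]², D₂ = 2Dθ²/V²,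 D₃ = (2 z_max θ/V)√D₁, z_max being the maximum over all z_l^diff, q_k^diff, h_m^diff. -/
/-- The "drift-plus-penalty" expression `E_t(α,γ)` whose (approximate) per-slot
minimization defines the universal scheduling algorithm. -/
noncomputable def driftExpr {Act Ω : Type*} {K M L : ℕ}
    (ahat bhat : Fin K → Act → Ω → ℝ) (xhat : Fin M → Act → Ω → ℝ)
    (y0hat : Act → Ω → ℝ) (yhat : Fin L → Act → Ω → ℝ)
    (g : Fin L → (Fin M → ℝ) → ℝ) (f : (Fin M → ℝ) → ℝ) (V : ℝ)
    (w : Ω) (Zv : Fin L → ℝ) (Qv : Fin K → ℝ) (Hv : Fin M → ℝ)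
    (a : Act) (γ : Fin M → ℝ) : ℝ :=
  V * y0hat a w + V * f γ
    + ∑ l, Zv l * (yhat l a w + g l γ)
    + ∑ k, Qv k * (ahat k a w - bhat k a w)
    + ∑ m, Hv m * (γ m - xhat m a w)

/-!
Stack the queues into one vector `Θ = (Z, Q, H)`, with Lyapunov function `‖Θ‖₂² / 2` and total
backlog `‖Θ‖₁`. Comparing the policy with the Slater action, whose auxiliary vector is moved by
`θ + ε_H` against the sign of each `H_m`, shows that the Lyapunov function changes by at most
`θ (R - ‖Θ‖₁)` in one slot, with `θ R = B + C + V (…)`. Since `‖Θ‖₂ ≤ ‖Θ‖₁`, a slot can only push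
it up from the ball `‖Θ‖₁ < R`, so `‖Θ‖₂² ≤ max (R², 2 θ R)` forever. Each queue dominates the
accumulated violation of its constraint; Jensen's inequality and the Lipschitz bound on `g_l` turn
this into bounds on time averages.
-/

section TimeAverage

variable {E ι : Type*} [AddCommGroup E] [Module ℝ E] {T : ℕ}

/-- The average of `u` over the first `T` slots, written with an overbar in the paper. -/
noncomputable def timeAvg (u : ℕ → E) (T : ℕ) : E :=
  (T : ℝ)⁻¹ • ∑ τ ∈ Finset.range T, u τ

theorem timeAvg_eq_div (u : ℕ → ℝ) (T : ℕ) : timeAvg u T = (∑ τ ∈ Finset.range T, u τ) / T := by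
  rw [timeAvg, smul_eq_mul, inv_mul_eq_div]

theorem timeAvg_pi (u : ℕ → ι → ℝ) (T : ℕ) :
    timeAvg u T = fun i => (∑ τ ∈ Finset.range T, u τ i) / T := by
  funext i
  rw [timeAvg, Pi.smul_apply, Finset.sum_apply, smul_eq_mul, inv_mul_eq_div]

theorem timeAvg_add (u v : ℕ → E) (T : ℕ) :
    timeAvg (fun τ => u τ + v τ) T = timeAvg u T + timeAvg v T := by
  simp only [timeAvg, Finset.sum_add_distrib, smul_add]

theorem timeAvg_sub (u v : ℕ → E) (T : ℕ) :
    timeAvg (fun τ => u τ - v τ) T = timeAvg u T - timeAvg v T := by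
  simp only [timeAvg, Finset.sum_sub_distrib, smul_sub]

theorem sum_range_inv_eq_one (hT : T ≠ 0) : ∑ _τ ∈ Finset.range T, (T : ℝ)⁻¹ = 1 := by
  simp [hT]

theorem timeAvg_mem {s : Set E} {u : ℕ → E} (hs : Convex ℝ s) (hu : ∀ τ, u τ ∈ s) (hT : T ≠ 0) :
    timeAvg u T ∈ s := by
  rw [timeAvg, Finset.smul_sum]
  exact hs.sum_mem (fun _ _ => by positivity) (sum_range_inv_eq_one hT) fun τ _ => hu τ

theorem map_timeAvg_le {s : Set E} {φ : E → ℝ} {u : ℕ → E} (hφ : ConvexOn ℝ s φ)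
    (hu : ∀ τ, u τ ∈ s) (hT : T ≠ 0) : φ (timeAvg u T) ≤ timeAvg (fun τ => φ (u τ)) T := by
  simp only [timeAvg, Finset.smul_sum]
  exact hφ.map_sum_le (fun _ _ => by positivity) (sum_range_inv_eq_one hT) fun τ _ => hu τ

theorem timeAvg_le_div_of_add_le_succ {q u : ℕ → ℝ} {G : ℝ} (h0 : q 0 = 0)
    (h : ∀ t, q t + u t ≤ q (t + 1)) (hG : |q T| ≤ G) : timeAvg u T ≤ G / T := by
  rw [timeAvg_eq_div]
  gcongr
  calc ∑ τ ∈ Finset.range T, u τ ≤ ∑ τ ∈ Finset.range T, (q (τ + 1) - q τ) :=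
        Finset.sum_le_sum fun τ _ => le_sub_iff_add_le'.mpr (h τ)
    _ = q T := by rw [Finset.sum_range_sub, h0, sub_zero]
    _ ≤ G := (le_abs_self _).trans hG

theorem timeAvg_eq_div_of_succ_eq_add {q u : ℕ → ℝ} (h0 : q 0 = 0)
    (h : ∀ t, q (t + 1) = q t + u t) (T : ℕ) : timeAvg u T = q T / T := by
  have hu : u = fun t => q (t + 1) - q t := funext fun t => by rw [h, add_sub_cancel_left]
  rw [timeAvg_eq_div, hu, Finset.sum_range_sub, h0, sub_zero]

theorem abs_timeAvg_sub_timeAvg_apply_le {q : ℕ → ℝ} {u v : ℕ → ι → ℝ} {i : ι} {G : ℝ}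
    (h0 : q 0 = 0) (h : ∀ t, q (t + 1) = q t + u t i - v t i) (hG : |q T| ≤ G) :
    |timeAvg u T i - timeAvg v T i| ≤ G / T := by
  have hq : timeAvg u T i - timeAvg v T i = q T / T := by
    rw [← timeAvg_eq_div_of_succ_eq_add h0 (fun t => (h t).trans (add_sub_assoc _ _ _)) T,
      timeAvg_sub]
    simp only [timeAvg_pi, timeAvg_eq_div]
  rw [hq, abs_div, Nat.abs_cast]
  gcongr

theorem timeAvg_add_map_timeAvg_le [Fintype ι] {s : Set (ι → ℝ)} {φ : (ι → ℝ) → ℝ} {β : ι → ℝ}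
    {y : ℕ → ℝ} {γ x : ℕ → ι → ℝ} {η : ℝ} (hφ : ConvexOn ℝ s φ)
    (hlip : ∀ p ∈ s, ∀ q ∈ s, φ q ≤ φ p + ∑ i, β i * |q i - p i|) (hβ : ∀ i, 0 ≤ β i)
    (hγ : ∀ τ, γ τ ∈ s) (hx : ∀ τ, x τ ∈ s) (hT : T ≠ 0)
    (hclose : ∀ i, |timeAvg γ T i - timeAvg x T i| ≤ η)
    (hη : timeAvg (fun τ => y τ + φ (γ τ)) T ≤ η) :
    timeAvg y T + φ (timeAvg x T) ≤ η * (1 + ∑ i, β i) := by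
  have hsum : ∑ i, β i * |timeAvg x T i - timeAvg γ T i| ≤ η * ∑ i, β i := by
    rw [mul_comm η, Finset.sum_mul]
    exact Finset.sum_le_sum fun i _ =>
      mul_le_mul_of_nonneg_left ((abs_sub_comm _ _).trans_le (hclose i)) (hβ i)
  calc timeAvg y T + φ (timeAvg x T)
      ≤ timeAvg y T + (φ (timeAvg γ T) + η * ∑ i, β i) := by
        gcongr
        exact (hlip _ (timeAvg_mem hφ.1 hγ hT) _ (timeAvg_mem hφ.1 hx hT)).trans (by gcongr)
    _ ≤ timeAvg y T + (timeAvg (fun τ => φ (γ τ)) T + η * ∑ i, β i) := by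
        gcongr
        exact map_timeAvg_le hφ hγ hT
    _ = timeAvg (fun τ => y τ + φ (γ τ)) T + η * ∑ i, β i := by rw [timeAvg_add, add_assoc]
    _ ≤ η * (1 + ∑ i, β i) := by linarith

end TimeAverage

section Lyapunov

variable {ι κ μ : Type*} [Fintype ι] [Fintype κ] [Fintype μ]

/-- The quadratic Lyapunov function `‖Θ‖₂² / 2` of a queue vector. -/
noncomputable def lyapunov (Θ : ι → ℝ) : ℝ :=
  (∑ i, Θ i ^ 2) / 2

/-- The total backlog `‖Θ‖₁` of a queue vector; absolute values account for the queues `H_m`, which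
may be negative. -/
def backlog (Θ : ι → ℝ) : ℝ :=
  ∑ i, |Θ i|

/-- The combined queue vector `Θ = (Z, Q, H)` of the paper, indexed by a disjoint union. -/
def queueVec (Z : ι → ℝ) (Q : κ → ℝ) (H : μ → ℝ) : ι ⊕ κ ⊕ μ → ℝ :=
  Sum.elim Z (Sum.elim Q H)

theorem backlog_nonneg (Θ : ι → ℝ) : 0 ≤ backlog Θ :=
  Finset.sum_nonneg fun _ _ => abs_nonneg _

theorem lyapunov_le_half_sq_backlog (Θ : ι → ℝ) : lyapunov Θ ≤ backlog Θ ^ 2 / 2 := by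
  have h := Finset.sum_sq_le_sq_sum_of_nonneg (s := Finset.univ) fun i _ => abs_nonneg (Θ i)
  simp only [sq_abs] at h
  exact div_le_div_of_nonneg_right h zero_le_two

theorem abs_le_of_lyapunov_le {Θ : ι → ℝ} {G : ℝ} (hG : 0 ≤ G) (h : lyapunov Θ ≤ G ^ 2 / 2)
    (i : ι) : |Θ i| ≤ G := by
  refine abs_le_of_sq_le_sq ?_ hG
  calc Θ i ^ 2 ≤ ∑ j, Θ j ^ 2 :=
        Finset.single_le_sum (f := fun j => Θ j ^ 2) (fun _ _ => sq_nonneg _) (Finset.mem_univ i)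
    _ ≤ G ^ 2 := (div_le_div_iff_of_pos_right zero_lt_two).mp h

theorem lyapunov_queueVec (Z : ι → ℝ) (Q : κ → ℝ) (H : μ → ℝ) :
    lyapunov (queueVec Z Q H) = lyapunov Z + lyapunov Q + lyapunov H := by
  simp only [lyapunov, queueVec, Fintype.sum_sum_type, Sum.elim_inl, Sum.elim_inr]
  ring

theorem backlog_queueVec {Z : ι → ℝ} {Q : κ → ℝ} (hZ : ∀ l, 0 ≤ Z l) (hQ : ∀ k, 0 ≤ Q k)
    (H : μ → ℝ) : backlog (queueVec Z Q H) = ∑ l, Z l + ∑ k, Q k + ∑ m, |H m| := by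
  simp only [backlog, queueVec, Fintype.sum_sum_type, Sum.elim_inl, Sum.elim_inr,
    abs_of_nonneg (hZ _), abs_of_nonneg (hQ _), add_assoc]

theorem lyapunov_le_add {Θ Θ' d e : ι → ℝ} (h : ∀ i, Θ' i ^ 2 ≤ Θ i ^ 2 + e i + 2 * (Θ i * d i)) :
    lyapunov Θ' ≤ lyapunov Θ + 1 / 2 * ∑ i, e i + ∑ i, Θ i * d i := by
  have hsum := Finset.sum_le_sum fun i (_ : i ∈ Finset.univ) => h i
  simp only [Finset.sum_add_distrib, ← Finset.mul_sum] at hsum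
  simp only [lyapunov]
  linarith

theorem sq_max_zero_le (z : ℝ) : max z 0 ^ 2 ≤ z ^ 2 :=
  sq_le_sq.mpr (abs_max_le_max_abs_abs.trans_eq (by simp))

theorem sq_max_sub_zero_add_le {q a b : ℝ} (hq : 0 ≤ q) (ha : 0 ≤ a) (hb : 0 ≤ b) :
    (max (q - b) 0 + a) ^ 2 ≤ q ^ 2 + (b ^ 2 + a ^ 2) + 2 * (q * (a - b)) := by
  have hmax : max (q - b) 0 ≤ q := max_le (sub_le_self q hb) hq
  calc (max (q - b) 0 + a) ^ 2 = max (q - b) 0 ^ 2 + 2 * (a * max (q - b) 0) + a ^ 2 := by ring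
    _ ≤ (q - b) ^ 2 + 2 * (a * q) + a ^ 2 := by
      gcongr ?_ + 2 * (a * ?_) + a ^ 2
      exact sq_max_zero_le _
    _ = q ^ 2 + (b ^ 2 + a ^ 2) + 2 * (q * (a - b)) := by ring

theorem lyapunov_queueVec_succ_le {Z Z' u : ι → ℝ} {Q Q' a b : κ → ℝ} {H H' w : μ → ℝ}
    (hQ : ∀ k, 0 ≤ Q k) (ha : ∀ k, 0 ≤ a k) (hb : ∀ k, 0 ≤ b k)
    (hZ' : ∀ l, Z' l = max (Z l + u l) 0) (hQ' : ∀ k, Q' k = max (Q k - b k) 0 + a k)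
    (hH' : ∀ m, H' m = H m + w m) :
    lyapunov (queueVec Z' Q' H') ≤ lyapunov (queueVec Z Q H)
      + (1 / 2 * ∑ l, u l ^ 2 + 1 / 2 * ∑ k, (b k ^ 2 + a k ^ 2) + 1 / 2 * ∑ m, w m ^ 2)
      + (∑ l, Z l * u l + ∑ k, Q k * (a k - b k) + ∑ m, H m * w m) := by
  have hZ_le : lyapunov Z' ≤ lyapunov Z + 1 / 2 * ∑ l, u l ^ 2 + ∑ l, Z l * u l :=
    lyapunov_le_add fun l => by
      rw [hZ' l]
      exact (sq_max_zero_le _).trans_eq (by ring)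
  have hQ_le : lyapunov Q' ≤ lyapunov Q + 1 / 2 * ∑ k, (b k ^ 2 + a k ^ 2)
      + ∑ k, Q k * (a k - b k) :=
    lyapunov_le_add fun k => by
      rw [hQ' k]
      exact sq_max_sub_zero_add_le (hQ k) (ha k) (hb k)
  have hH_le : lyapunov H' ≤ lyapunov H + 1 / 2 * ∑ m, w m ^ 2 + ∑ m, H m * w m :=
    lyapunov_le_add fun m => by
      rw [hH' m]
      exact le_of_eq (by ring)
  simp only [lyapunov_queueVec]
  linarith

theorem le_max_of_negative_drift {W S : ℕ → ℝ} {R θ : ℝ} (hθ : 0 ≤ θ) (hW0 : W 0 ≤ 0)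
    (hS : ∀ t, 0 ≤ S t) (hWS : ∀ t, W t ≤ S t ^ 2 / 2)
    (hdrift : ∀ t, W (t + 1) ≤ W t + θ * (R - S t)) (t : ℕ) :
    W t ≤ max (R ^ 2 / 2) (θ * R) := by
  induction t with
  | zero => exact hW0.trans (le_max_of_le_left (by positivity))
  | succ t ih =>
    rcases le_or_gt R (S t) with hRS | hSR
    · have hneg : θ * (R - S t) ≤ 0 := mul_nonpos_of_nonneg_of_nonpos hθ (by linarith)
      linarith [hdrift t]
    · -- `s ↦ s² / 2 + θ (R - s)` is convex, so on `[0, R]` it is largest at an endpoint.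
      have hstep : W (t + 1) ≤ S t ^ 2 / 2 + θ * (R - S t) := by linarith [hdrift t, hWS t]
      refine hstep.trans ?_
      rcases le_total (R / 2) θ with hlow | hhigh
      · refine le_max_of_le_right ?_
        nlinarith [hS t]
      · refine le_max_of_le_left ?_
        nlinarith [hS t]

theorem abs_le_of_negative_drift {Θ : ℕ → ι → ℝ} {R θ G : ℝ} (hθ : 0 ≤ θ) (hΘ : Θ 0 = 0)
    (hdrift : ∀ t, lyapunov (Θ (t + 1)) ≤ lyapunov (Θ t) + θ * (R - backlog (Θ t)))
    (hG : 0 ≤ G) (hRG : max (R ^ 2) (2 * θ * R) ≤ G ^ 2) (t : ℕ) (i : ι) : |Θ t i| ≤ G := by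
  have hlyap := le_max_of_negative_drift hθ (by simp [hΘ, lyapunov])
    (fun t => backlog_nonneg (Θ t)) (fun t => lyapunov_le_half_sq_backlog (Θ t)) hdrift t
  obtain ⟨hR, hθR⟩ := max_le_iff.mp hRG
  exact abs_le_of_lyapunov_le hG (hlyap.trans (max_le (by linarith) (by linarith))) i

end Lyapunov

section Slater

variable {μ : Type*}

/-- The auxiliary vector compared with the policy: `x` moved by `r` in each coordinate, against the
sign of the backlog `H`, so that the queues `H_m` drift towards zero at rate `r`. -/
noncomputable def slaterPoint (r : ℝ) (x H : μ → ℝ) : μ → ℝ :=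
  fun m => x m - r * SignType.sign (H m)

theorem abs_slaterPoint_sub_le {r : ℝ} (hr : 0 ≤ r) (x H : μ → ℝ) (m : μ) :
    |slaterPoint r x H m - x m| ≤ r := by
  have hsign : |(SignType.sign (H m) : ℝ)| ≤ 1 := by
    rcases lt_trichotomy (H m) 0 with h | h | h <;> simp [h]
  rw [slaterPoint, sub_sub_cancel_left, abs_neg, abs_mul, abs_of_nonneg hr]
  exact mul_le_of_le_one_right hr hsign

theorem sum_mul_slaterPoint_sub [Fintype μ] (r : ℝ) (x H : μ → ℝ) :
    ∑ m, H m * (slaterPoint r x H m - x m) = -(r * ∑ m, |H m|) := by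
  rw [Finset.mul_sum, ← Finset.sum_neg_distrib]
  refine Finset.sum_congr rfl fun m _ => ?_
  rw [slaterPoint, ← self_mul_sign (H m)]
  ring

theorem map_slaterPoint_le [Fintype μ] {s : Set (μ → ℝ)} {φ : (μ → ℝ) → ℝ} {β : μ → ℝ}
    (hlip : ∀ p ∈ s, ∀ q ∈ s, φ q ≤ φ p + ∑ m, β m * |q m - p m|) (hβ : ∀ m, 0 ≤ β m)
    {r : ℝ} (hr : 0 ≤ r) {x H : μ → ℝ} (hx : x ∈ s) (hx' : slaterPoint r x H ∈ s) :
    φ (slaterPoint r x H) ≤ φ x + r * ∑ m, β m := by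
  refine (hlip x hx _ hx').trans ?_
  rw [mul_comm r, Finset.sum_mul]
  gcongr with m
  · exact hβ m
  · exact abs_slaterPoint_sub_le hr x H m

variable {Ω Act : Type*} {K M L : ℕ} {ahat bhat : Fin K → Act → Ω → ℝ}
  {xhat : Fin M → Act → Ω → ℝ} {y0hat : Act → Ω → ℝ} {yhat : Fin L → Act → Ω → ℝ}
  {g : Fin L → (Fin M → ℝ) → ℝ} {f : (Fin M → ℝ) → ℝ} {V : ℝ} {w : Ω}
  {Z : Fin L → ℝ} {Q : Fin K → ℝ} {H : Fin M → ℝ} {y0max fmax θ εZ εQ εH : ℝ}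

theorem lyapunov_queueVec_succ_le_of_driftExpr_le {Z' : Fin L → ℝ} {Q' : Fin K → ℝ}
    {H' : Fin M → ℝ} {a : Act} {γ : Fin M → ℝ} {y0min fmin B P : ℝ} (hV : 0 ≤ V)
    (hQ : ∀ k, 0 ≤ Q k) (ha : ∀ k, 0 ≤ ahat k a w) (hb : ∀ k, 0 ≤ bhat k a w)
    (hy0 : y0min ≤ y0hat a w) (hf : fmin ≤ f γ)
    (hB : (1 / 2) * ∑ l, (yhat l a w + g l γ) ^ 2
        + (1 / 2) * ∑ k, ((bhat k a w) ^ 2 + (ahat k a w) ^ 2)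
        + (1 / 2) * ∑ m, (γ m - xhat m a w) ^ 2 ≤ B)
    (hZ' : ∀ l, Z' l = max (Z l + yhat l a w + g l γ) 0)
    (hQ' : ∀ k, Q' k = max (Q k - bhat k a w) 0 + ahat k a w)
    (hH' : ∀ m, H' m = H m + γ m - xhat m a w)
    (hdrift : driftExpr ahat bhat xhat y0hat yhat g f V w Z Q H a γ + B
      ≤ V * (y0min + fmin) + P) :
    lyapunov (queueVec Z' Q' H') ≤ lyapunov (queueVec Z Q H) + P := by
  have hstep := lyapunov_queueVec_succ_le (u := fun l => yhat l a w + g l γ) hQ ha hb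
    (fun l => (hZ' l).trans (by rw [add_assoc])) hQ'
    (fun m => (hH' m).trans (add_sub_assoc _ _ _))
  have hpenalty := mul_le_mul_of_nonneg_left (add_le_add hy0 hf) hV
  rw [driftExpr] at hdrift
  linarith

theorem driftExpr_slaterPoint_le {a : Act} (hV : 0 ≤ V) (hZ : ∀ l, 0 ≤ Z l) (hQ : ∀ k, 0 ≤ Q k)
    (hy0 : y0hat a w ≤ y0max) (hf : f (slaterPoint (θ + εH) (fun m => xhat m a w) H) ≤ fmax)
    (hyg : ∀ l, yhat l a w + g l (slaterPoint (θ + εH) (fun m => xhat m a w) H) ≤ -(θ + εZ))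
    (hab : ∀ k, ahat k a w - bhat k a w ≤ -(θ + εQ)) :
    driftExpr ahat bhat xhat y0hat yhat g f V w Z Q H a
        (slaterPoint (θ + εH) (fun m => xhat m a w) H)
      ≤ V * (y0max + fmax) - θ * backlog (queueVec Z Q H)
        - (∑ l, Z l * εZ + ∑ k, Q k * εQ + ∑ m, |H m| * εH) := by
  have hZ_le := Finset.sum_le_sum fun l (_ : l ∈ Finset.univ) =>
    mul_le_mul_of_nonneg_left (hyg l) (hZ l)
  have hQ_le := Finset.sum_le_sum fun k (_ : k ∈ Finset.univ) =>
    mul_le_mul_of_nonneg_left (hab k) (hQ k)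
  have hH_eq := sum_mul_slaterPoint_sub (θ + εH) (fun m => xhat m a w) H
  have hpenalty := mul_le_mul_of_nonneg_left (add_le_add hy0 hf) hV
  rw [driftExpr, backlog_queueVec hZ hQ]
  simp only [← Finset.sum_mul] at hZ_le hQ_le ⊢
  linarith

theorem mem_inter_box_of_abs_sub_le {X : Set (μ → ℝ)} {xmin xmax x x' : μ → ℝ} {δ : ℝ}
    (hX : ∀ ε : μ → ℝ, (∀ m, |ε m| ≤ δ) → x + ε ∈ X)
    (hbox : ∀ m, xmin m + δ ≤ x m ∧ x m ≤ xmax m - δ) (hx' : ∀ m, |x' m - x m| ≤ δ) :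
    x' ∈ X ∩ {x | ∀ m, xmin m ≤ x m ∧ x m ≤ xmax m} :=
  ⟨by simpa only [add_sub_cancel] using hX (x' - x) hx',
    fun m => by constructor <;> linarith [hbox m, abs_le.mp (hx' m)]⟩

theorem exists_driftExpr_le_of_slater {S : Set Act} {X E : Set (Fin M → ℝ)}
    {β : Fin L → Fin M → ℝ} {δ : ℝ} (hV : 0 ≤ V) (hZ : ∀ l, 0 ≤ Z l) (hQ : ∀ k, 0 ≤ Q k)
    (hXE : X ⊆ E) (hy0 : ∀ a ∈ S, y0hat a w ≤ y0max) (hf : ∀ x ∈ E, f x ≤ fmax)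
    (hβ : ∀ l m, 0 ≤ β l m)
    (hglip : ∀ l, ∀ x ∈ E, ∀ y ∈ E, g l y ≤ g l x + ∑ m, β l m * |y m - x m|)
    (hslater : ∃ a ∈ S, (∀ l, yhat l a w + g l (fun m => xhat m a w) ≤ -δ) ∧
      (∀ k, ahat k a w ≤ bhat k a w - δ) ∧
      ∀ x' : Fin M → ℝ, (∀ m, |x' m - xhat m a w| ≤ δ) → x' ∈ X)
    (hθ : 0 ≤ θ) (hεH : 0 ≤ εH) (hθQ : θ + εQ ≤ δ) (hθH : θ + εH ≤ δ)
    (hθZ : ∀ l, θ + εZ + (θ + εH) * ∑ m, β l m ≤ δ) :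
    ∃ a ∈ S, ∃ γ ∈ X, driftExpr ahat bhat xhat y0hat yhat g f V w Z Q H a γ
      ≤ V * (y0max + fmax) - θ * backlog (queueVec Z Q H)
        - (∑ l, Z l * εZ + ∑ k, Q k * εQ + ∑ m, |H m| * εH) := by
  obtain ⟨a, ha, hyg, hab, hball⟩ := hslater
  have hr : 0 ≤ θ + εH := add_nonneg hθ hεH
  have hx : (fun m => xhat m a w) ∈ E := hXE (hball _ fun m => by simpa using hr.trans hθH)
  have hx' : slaterPoint (θ + εH) (fun m => xhat m a w) H ∈ X :=
    hball _ fun m => (abs_slaterPoint_sub_le hr _ H m).trans hθH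
  refine ⟨a, ha, _, hx', driftExpr_slaterPoint_le hV hZ hQ (hy0 a ha) (hf _ (hXE hx')) ?_ ?_⟩
  · intro l
    linarith [hyg l, hθZ l, map_slaterPoint_le (hglip l) (hβ l) hr hx (hXE hx')]
  · intro k
    linarith [hab k]

end Slater

section Constants

theorem slackRate_spec {ι : Type*} {βs : ι → ℝ} {βsum δ εZ εQ εH θ : ℝ} (hβ : ∀ l, 0 ≤ βs l)
    (hβsum : IsGreatest {x | ∃ l, x = βs l} βsum) (hεH : 0 ≤ εH) (hεQδ : εQ < δ) (hεHδ : εH < δ)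
    (hεZδ : ∀ l, εZ + εH * βs l < δ)
    (hθ : θ = min (δ - εQ) (min (δ - εH) ((δ - εZ - εH * βsum) / (1 + βsum)))) :
    0 < θ ∧ θ + εQ ≤ δ ∧ θ + εH ≤ δ ∧ ∀ l, θ + εZ + (θ + εH) * βs l ≤ δ := by
  obtain ⟨⟨l₀, rfl⟩, hmax⟩ := hβsum
  have hden : 0 < 1 + βs l₀ := by linarith [hβ l₀]
  have hθ0 : 0 < θ := by
    rw [hθ]
    exact lt_min (by linarith) (lt_min (by linarith) (div_pos (by linarith [hεZδ l₀]) hden))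
  obtain ⟨hθQ, hθH, hθZ⟩ : θ ≤ δ - εQ ∧ θ ≤ δ - εH ∧
      θ ≤ (δ - εZ - εH * βs l₀) / (1 + βs l₀) := by
    simpa only [le_min_iff] using hθ.le
  rw [le_div_iff₀ hden] at hθZ
  refine ⟨hθ0, by linarith, by linarith, fun l => ?_⟩
  calc θ + εZ + (θ + εH) * βs l ≤ θ + εZ + (θ + εH) * βs l₀ := by
        gcongr
        exact hmax ⟨l, rfl⟩
    _ ≤ δ := by linarith

-- With `R = V P / θ`, the right-hand side is `R ^ 2 + 2 * D + 2 * zmax * |R|`.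
theorem max_le_sq_slaterConst {P V D θ zmax : ℝ} (hV : 0 < V) (hθ : 0 < θ) (hD : 0 ≤ D)
    (hzmax : θ ≤ zmax) :
    max ((V * P / θ) ^ 2) (2 * θ * (V * P / θ)) ≤
      (V * √(P ^ 2 + 2 * D * θ ^ 2 / V ^ 2 + 2 * zmax * θ / V * √(P ^ 2)) / θ) ^ 2 := by
  have hz : 0 < zmax := hθ.trans_le hzmax
  have hsq : (V * √(P ^ 2 + 2 * D * θ ^ 2 / V ^ 2 + 2 * zmax * θ / V * √(P ^ 2)) / θ) ^ 2
      = (V * P / θ) ^ 2 + 2 * D + 2 * zmax * |V * P / θ| := by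
    rw [div_pow, mul_pow, Real.sq_sqrt (by positivity), Real.sqrt_sq_eq_abs, abs_div, abs_mul,
      abs_of_pos hV, abs_of_pos hθ]
    field_simp
  have hR : θ * (V * P / θ) ≤ zmax * |V * P / θ| :=
    (mul_le_mul_of_nonneg_left (le_abs_self _) hθ.le).trans
      (mul_le_mul_of_nonneg_right hzmax (abs_nonneg _))
  rw [hsq]
  refine max_le ?_ ?_
  · linarith [show 0 ≤ zmax * |V * P / θ| by positivity]
  · linarith [sq_nonneg (V * P / θ)]

end Constants

theorem stmt_8_general {Ω Act : Type*} {ω : ℕ → Ω} {A : Ω → Set Act} {K M L : ℕ}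
    {ahat bhat : Fin K → Act → Ω → ℝ} {xhat : Fin M → Act → Ω → ℝ}
    {y0hat : Act → Ω → ℝ} {yhat : Fin L → Act → Ω → ℝ}
    {X E : Set (Fin M → ℝ)} {f : (Fin M → ℝ) → ℝ} {g : Fin L → (Fin M → ℝ) → ℝ}
    {β : Fin L → Fin M → ℝ} {y0min y0max fmin fmax δ V C B εV εZ εQ εH θ R G : ℝ}
    (hX : Convex ℝ X) (hXE : X ⊆ E)
    (hy0 : ∀ w, ∀ a ∈ A w, y0min ≤ y0hat a w ∧ y0hat a w ≤ y0max)
    (hf : ∀ x ∈ E, fmin ≤ f x ∧ f x ≤ fmax)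
    (hg : ∀ l, ConvexOn ℝ E (g l)) (hβ : ∀ l m, 0 ≤ β l m)
    (hglip : ∀ l, ∀ x ∈ E, ∀ y ∈ E, g l y ≤ g l x + ∑ m, β l m * |y m - x m|)
    (hslater : ∀ t, ∃ a ∈ A (ω t),
      (∀ l, yhat l a (ω t) + g l (fun m => xhat m a (ω t)) ≤ -δ) ∧
      (∀ k, ahat k a (ω t) ≤ bhat k a (ω t) - δ) ∧
      ∀ x' : Fin M → ℝ, (∀ m, |x' m - xhat m a (ω t)| ≤ δ) → x' ∈ X)
    (hV : 0 ≤ V) (hθ : 0 ≤ θ) (hεH : 0 ≤ εH) (hθQ : θ + εQ ≤ δ) (hθH : θ + εH ≤ δ)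
    (hθZ : ∀ l, θ + εZ + (θ + εH) * ∑ m, β l m ≤ δ)
    {α : ℕ → Act} {γ : ℕ → Fin M → ℝ} (hα : ∀ t, α t ∈ A (ω t)) (hγ : ∀ t, γ t ∈ X)
    (ha : ∀ t k, 0 ≤ ahat k (α t) (ω t)) (hb : ∀ t k, 0 ≤ bhat k (α t) (ω t))
    (hx : ∀ t, (fun m => xhat m (α t) (ω t)) ∈ E)
    (hB : ∀ t, (1 / 2) * ∑ l, (yhat l (α t) (ω t) + g l (γ t)) ^ 2
        + (1 / 2) * ∑ k, ((bhat k (α t) (ω t)) ^ 2 + (ahat k (α t) (ω t)) ^ 2)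
        + (1 / 2) * ∑ m, (γ t m - xhat m (α t) (ω t)) ^ 2 ≤ B)
    {Q : Fin K → ℕ → ℝ} {Z : Fin L → ℕ → ℝ} {H : Fin M → ℕ → ℝ}
    (hQ0 : ∀ k, Q k 0 = 0) (hZ0 : ∀ l, Z l 0 = 0) (hH0 : ∀ m, H m 0 = 0)
    (hQ : ∀ k t, Q k (t + 1) = max (Q k t - bhat k (α t) (ω t)) 0 + ahat k (α t) (ω t))
    (hZ : ∀ l t, Z l (t + 1) = max (Z l t + yhat l (α t) (ω t) + g l (γ t)) 0)
    (hH : ∀ m t, H m (t + 1) = H m t + γ t m - xhat m (α t) (ω t))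
    (hpolicy : ∀ t, ∀ a' ∈ A (ω t), ∀ γ' ∈ X,
      driftExpr ahat bhat xhat y0hat yhat g f V (ω t) (Z · t) (Q · t) (H · t) (α t) (γ t)
        ≤ driftExpr ahat bhat xhat y0hat yhat g f V (ω t) (Z · t) (Q · t) (H · t) a' γ'
          + (C + V * εV + ∑ l, Z l t * εZ + ∑ k, Q k t * εQ + ∑ m, |H m t| * εH))
    (hR : θ * R = B + C + V * ((y0max - y0min) + (fmax - fmin) + εV))
    (hG : 0 ≤ G) (hRG : max (R ^ 2) (2 * θ * R) ≤ G ^ 2) {T : ℕ} (hT : T ≠ 0) :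
    (∀ l, timeAvg (fun τ => yhat l (α τ) (ω τ)) T
        + g l (timeAvg (fun τ m => xhat m (α τ) (ω τ)) T) ≤ G / T * (1 + ∑ m, β l m)) ∧
    (∀ k, timeAvg (fun τ => ahat k (α τ) (ω τ)) T
        ≤ timeAvg (fun τ => bhat k (α τ) (ω τ)) T + G / T) ∧
    ∃ ε : Fin M → ℝ, (∀ m, |ε m| ≤ G / T) ∧
      timeAvg (fun τ m => xhat m (α τ) (ω τ)) T + ε ∈ X := by
  have hZ_nonneg : ∀ t l, 0 ≤ Z l t
    | 0, l => (hZ0 l).ge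
    | t + 1, l => by rw [hZ]; exact le_max_right _ _
  have hQ_nonneg : ∀ t k, 0 ≤ Q k t
    | 0, k => (hQ0 k).ge
    | t + 1, k => by rw [hQ]; exact add_nonneg (le_max_right _ _) (ha t k)
  let Θ : ℕ → Fin L ⊕ Fin K ⊕ Fin M → ℝ := fun t => queueVec (Z · t) (Q · t) (H · t)
  have hdrift (t : ℕ) : lyapunov (Θ (t + 1)) ≤ lyapunov (Θ t) + θ * (R - backlog (Θ t)) := by
    obtain ⟨a', ha', γ', hγ', hcompare⟩ := exists_driftExpr_le_of_slater (H := (H · t)) hV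
      (hZ_nonneg t) (hQ_nonneg t) hXE (fun a h => (hy0 _ a h).2) (fun x h => (hf x h).2) hβ hglip
      (hslater t) hθ hεH hθQ hθH hθZ
    exact lyapunov_queueVec_succ_le_of_driftExpr_le hV (hQ_nonneg t) (ha t) (hb t)
      (hy0 _ _ (hα t)).1 (hf _ (hXE (hγ t))).1 (hB t) (hZ · t) (hQ · t) (hH · t)
      (by linarith [hpolicy t a' ha' γ' hγ'])
  have hΘ : ∀ i, |Θ T i| ≤ G := abs_le_of_negative_drift hθ
    (by ext (l | k | m) <;> simp [Θ, queueVec, hZ0, hQ0, hH0]) hdrift hG hRG T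
  have hclose (m : Fin M) :
      |timeAvg γ T m - timeAvg (fun τ m => xhat m (α τ) (ω τ)) T m| ≤ G / T :=
    abs_timeAvg_sub_timeAvg_apply_le (hH0 m) (hH m) (hΘ (.inr (.inr m)))
  refine ⟨fun l => ?_, fun k => ?_, timeAvg γ T - timeAvg (fun τ m => xhat m (α τ) (ω τ)) T,
    hclose, by simpa only [add_sub_cancel] using timeAvg_mem hX hγ hT⟩
  · refine timeAvg_add_map_timeAvg_le (hg l) (hglip l) (hβ l) (fun t => hXE (hγ t)) hx hT hclose
      (timeAvg_le_div_of_add_le_succ (hZ0 l) (fun t => ?_) (hΘ (.inl l)))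
    rw [hZ, ← add_assoc]
    exact le_max_left _ _
  · rw [← sub_le_iff_le_add', ← timeAvg_sub]
    refine timeAvg_le_div_of_add_le_succ (hQ0 k) (fun t => ?_) (hΘ (.inr (.inl k)))
    rw [hQ]
    linarith [le_max_left (Q k t - bhat k (α t) (ω t)) 0]

/-- Theorem 2(b): under Assumptions A1 and A3 (Slater slackness `δ`), a
`C(t)`-approximate policy started from empty queues satisfies, for any `t_end > 0`,
`ȳ_l + g_l(x̄) ≤ (VC₃/(θ t_end))[1 + Σ_m β_{l,m}]` for every `l`,
`ā_k ≤ b̄_k + VC₃/(θ t_end)` for every `k`, and there is `ε` with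
`|ε_m| ≤ VC₃/(θ t_end)` such that `x̄ + ε ∈ X`. -/
theorem stmt_8
    {Ω Act : Type*} (ω : ℕ → Ω) (A : Ω → Set Act) (hAne : ∀ w, (A w).Nonempty)
    (K M L : ℕ) (hK : 0 < K) (hM : 0 < M) (hL : 0 < L)
    (ahat bhat : Fin K → Act → Ω → ℝ) (xhat : Fin M → Act → Ω → ℝ)
    (y0hat : Act → Ω → ℝ) (yhat : Fin L → Act → Ω → ℝ)
    (amax bmax : Fin K → ℝ) (xmin xmax : Fin M → ℝ)
    (y0min y0max : ℝ) (ymin ymax : Fin L → ℝ)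
    -- Assumption A1 (boundedness)
    (hA1a : ∀ (w : Ω) (a' : Act), a' ∈ A w → ∀ k, 0 ≤ ahat k a' w ∧ ahat k a' w ≤ amax k)
    (hA1b : ∀ (w : Ω) (a' : Act), a' ∈ A w → ∀ k, 0 ≤ bhat k a' w ∧ bhat k a' w ≤ bmax k)
    (hA1x : ∀ (w : Ω) (a' : Act), a' ∈ A w → ∀ m, xmin m ≤ xhat m a' w ∧ xhat m a' w ≤ xmax m)
    (hA1y0 : ∀ (w : Ω) (a' : Act), a' ∈ A w → y0min ≤ y0hat a' w ∧ y0hat a' w ≤ y0max)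
    (hA1y : ∀ (w : Ω) (a' : Act), a' ∈ A w → ∀ l, ymin l ≤ yhat l a' w ∧ yhat l a' w ≤ ymax l)
    -- the convex set X and the cost functions f, g_l on the box
    (X : Set (Fin M → ℝ)) (hX : Convex ℝ X)
    (f : (Fin M → ℝ) → ℝ) (g : Fin L → (Fin M → ℝ) → ℝ)
    (fmin fmax : ℝ) (gmin gmax : Fin L → ℝ) (β : Fin L → Fin M → ℝ)
    (hβ : ∀ l m, 0 ≤ β l m)
    (hfconv : ConvexOn ℝ {x : Fin M → ℝ | ∀ m, xmin m ≤ x m ∧ x m ≤ xmax m} f)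
    (hfcont : ContinuousOn f {x : Fin M → ℝ | ∀ m, xmin m ≤ x m ∧ x m ≤ xmax m})
    (hfbd : ∀ x ∈ {x : Fin M → ℝ | ∀ m, xmin m ≤ x m ∧ x m ≤ xmax m},
      fmin ≤ f x ∧ f x ≤ fmax)
    (hgconv : ∀ l, ConvexOn ℝ {x : Fin M → ℝ | ∀ m, xmin m ≤ x m ∧ x m ≤ xmax m} (g l))
    (hgcont : ∀ l, ContinuousOn (g l) {x : Fin M → ℝ | ∀ m, xmin m ≤ x m ∧ x m ≤ xmax m})
    (hgbd : ∀ l, ∀ x ∈ {x : Fin M → ℝ | ∀ m, xmin m ≤ x m ∧ x m ≤ xmax m},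
      gmin l ≤ g l x ∧ g l x ≤ gmax l)
    (hglip : ∀ (l : Fin L) (x y : Fin M → ℝ),
      (∀ m, xmin m ≤ x m ∧ x m ≤ xmax m) →
      (∀ m, xmin m ≤ x m + y m ∧ x m + y m ≤ xmax m) →
      g l (x + y) ≤ g l x + ∑ m, β l m * |y m|)
    -- Assumption A3 (Slater condition with slackness δ)
    (δ : ℝ) (hδ : 0 < δ)
    (hA3 : ∀ t, ∃ a' ∈ A (ω t),
      (∀ l, yhat l a' (ω t) + g l (fun m => xhat m a' (ω t)) ≤ -δ) ∧
      (∀ k, ahat k a' (ω t) ≤ bhat k a' (ω t) - δ) ∧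
      (∀ ε : Fin M → ℝ, (∀ m, |ε m| ≤ δ) →
        ((fun m => xhat m a' (ω t)) + ε) ∈ X) ∧
      (∀ m, xmin m + δ ≤ xhat m a' (ω t) ∧ xhat m a' (ω t) ≤ xmax m - δ))
    -- parameters and the constants B and D
    (V C B D : ℝ) (hV : 0 < V) (hC : 0 ≤ C)
    (hB : ∀ (t : ℕ) (a' : Act) (γ' : Fin M → ℝ), a' ∈ A (ω t) → γ' ∈ X →
      (∀ m, xmin m ≤ γ' m ∧ γ' m ≤ xmax m) →
      (1 / 2) * ∑ l, (yhat l a' (ω t) + g l γ') ^ 2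
        + (1 / 2) * ∑ k, ((bhat k a' (ω t)) ^ 2 + (ahat k a' (ω t)) ^ 2)
        + (1 / 2) * ∑ m, (γ' m - xhat m a' (ω t)) ^ 2 ≤ B)
    (hD : ∀ (t : ℕ) (a' : Act) (γ' : Fin M → ℝ), a' ∈ A (ω t) → γ' ∈ X →
      (∀ m, xmin m ≤ γ' m ∧ γ' m ≤ xmax m) →
      (1 / 2) * ∑ l, max (|ymax l + gmax l|) (|ymin l + gmin l|)
          * |yhat l a' (ω t) + g l γ'|
        + ∑ m, (xmax m - xmin m) * |xhat m a' (ω t) - γ' m|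
        + (1 / 2) * ∑ k, max (bmax k) (amax k)
          * max (bhat k a' (ω t)) (ahat k a' (ω t)) ≤ D)
    -- approximation error constants
    (εV εZ εQ εH : ℝ) (hεV : 0 ≤ εV) (hεZ : 0 ≤ εZ) (hεQ : 0 ≤ εQ) (hεH : 0 ≤ εH)
    (hεQδ : εQ < δ) (hεHδ : εH < δ)
    (hεZδ : ∀ l, εZ + εH * ∑ m, β l m < δ)
    -- the C(t)-approximate policy and the queues (initially empty)
    (α : ℕ → Act) (γ : ℕ → Fin M → ℝ)
    (hα : ∀ t, α t ∈ A (ω t)) (hγX : ∀ t, γ t ∈ X)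
    (hγbox : ∀ t m, xmin m ≤ γ t m ∧ γ t m ≤ xmax m)
    (Q : Fin K → ℕ → ℝ) (Z : Fin L → ℕ → ℝ) (H : Fin M → ℕ → ℝ)
    (hQ0 : ∀ k, Q k 0 = 0) (hZ0 : ∀ l, Z l 0 = 0) (hH0 : ∀ m, H m 0 = 0)
    (hQ : ∀ k t, Q k (t + 1) = max (Q k t - bhat k (α t) (ω t)) 0 + ahat k (α t) (ω t))
    (hZ : ∀ l t, Z l (t + 1) = max (Z l t + yhat l (α t) (ω t) + g l (γ t)) 0)
    (hH : ∀ m t, H m (t + 1) = H m t + γ t m - xhat m (α t) (ω t))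
    (Ct : ℕ → ℝ)
    (hCt : ∀ t, Ct t ≤ C + V * εV + (∑ l, Z l t * εZ) + (∑ k, Q k t * εQ)
        + (∑ m, |H m t| * εH))
    (hCapprox : ∀ (t : ℕ) (a' : Act) (γ' : Fin M → ℝ), a' ∈ A (ω t) → γ' ∈ X →
      (∀ m, xmin m ≤ γ' m ∧ γ' m ≤ xmax m) →
      driftExpr ahat bhat xhat y0hat yhat g f V (ω t)
          (fun l => Z l t) (fun k => Q k t) (fun m => H m t) (α t) (γ t)
        ≤ driftExpr ahat bhat xhat y0hat yhat g f V (ω t)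
          (fun l => Z l t) (fun k => Q k t) (fun m => H m t) a' γ' + Ct t)
    -- derived constants
    (βsum : ℝ) (hβsum : IsGreatest {x : ℝ | ∃ l, x = ∑ m, β l m} βsum)
    (zmax : ℝ)
    (hzmax : IsGreatest {x : ℝ |
        (∃ l, x = max (|ymax l + gmax l|) (|ymin l + gmin l|)) ∨
        (∃ k, x = max (bmax k) (amax k)) ∨
        (∃ m, x = xmax m - xmin m)} zmax)
    (θ : ℝ)
    (hθ : θ = min (δ - εQ) (min (δ - εH) ((δ - εZ - εH * βsum) / (1 + βsum))))
    (D₁ D₂ D₃ C₃ : ℝ)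
    (hD₁ : D₁ = ((B + C) / V + (y0max - y0min) + (fmax - fmin) + εV) ^ 2)
    (hD₂ : D₂ = 2 * D * θ ^ 2 / V ^ 2)
    (hD₃ : D₃ = 2 * zmax * θ / V * Real.sqrt D₁)
    (hC₃ : C₃ = Real.sqrt (D₁ + D₂ + D₃))
    (tend : ℕ) (htend : 0 < tend) :
    (∀ l, (∑ τ ∈ Finset.range tend, yhat l (α τ) (ω τ)) / tend
        + g l (fun m => (∑ τ ∈ Finset.range tend, xhat m (α τ) (ω τ)) / tend)
        ≤ V * C₃ / (θ * tend) * (1 + ∑ m, β l m)) ∧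
    (∀ k, (∑ τ ∈ Finset.range tend, ahat k (α τ) (ω τ)) / tend
        ≤ (∑ τ ∈ Finset.range tend, bhat k (α τ) (ω τ)) / tend
          + V * C₃ / (θ * tend)) ∧
    (∃ ε : Fin M → ℝ, (∀ m, |ε m| ≤ V * C₃ / (θ * tend)) ∧
      ((fun m => (∑ τ ∈ Finset.range tend, xhat m (α τ) (ω τ)) / tend) + ε) ∈ X) := by
  obtain ⟨hθ0, hθQ, hθH, hθZ⟩ := slackRate_spec (fun l => Finset.sum_nonneg fun m _ => hβ l m)
    hβsum hεH hεQδ hεHδ hεZδ hθ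
  have hzθ : θ ≤ zmax := by
    obtain ⟨_, -, -, -, -, hx⟩ := hA3 0
    linarith [hx ⟨0, hM⟩, hzmax.2 (.inr (.inr ⟨⟨0, hM⟩, rfl⟩))]
  have hD0 : 0 ≤ D := by
    refine (add_nonneg (add_nonneg (by positivity) ?_) ?_).trans
      (hD 0 (α 0) (γ 0) (hα 0) (hγX 0) (hγbox 0))
    · exact Finset.sum_nonneg fun m _ => mul_nonneg (by linarith [hγbox 0 m]) (abs_nonneg _)
    · refine mul_nonneg one_half_pos.le (Finset.sum_nonneg fun k _ => ?_)
      obtain ⟨ha0, ha⟩ := hA1a _ _ (hα 0) k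
      exact mul_nonneg (le_max_of_le_right (ha0.trans ha)) (le_max_of_le_right ha0)
  subst hC₃ hD₃ hD₂ hD₁
  obtain ⟨hyg, hab, ε, hε, hεX⟩ := stmt_8_general
    (R := V * ((B + C) / V + (y0max - y0min) + (fmax - fmin) + εV) / θ)
    (hX.inter hfconv.1) Set.inter_subset_right hA1y0 hfbd hgconv hβ
    (fun l x hx y hy => by simpa using hglip l x (y - x) hx (by simpa using hy))
    (fun t => let ⟨a, ha, hyg, hab, hX', hbox⟩ := hA3 t
      ⟨a, ha, hyg, hab, fun _ => mem_inter_box_of_abs_sub_le hX' hbox⟩)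
    hV.le hθ0.le hεH hθQ hθH hθZ hα (fun t => ⟨hγX t, hγbox t⟩)
    (fun t k => (hA1a _ _ (hα t) k).1) (fun t k => (hA1b _ _ (hα t) k).1)
    (fun t => hA1x _ _ (hα t)) (fun t => hB t _ _ (hα t) (hγX t) (hγbox t)) hQ0 hZ0 hH0 hQ hZ hH
    (fun t a' ha' γ' hγ' => (hCapprox t a' γ' ha' hγ'.1 hγ'.2).trans (by gcongr; exact hCt t))
    (by field_simp; ring) (by positivity) (max_le_sq_slaterConst hV hθ0 hD0 hzθ) htend.ne'
  simp only [timeAvg_eq_div, timeAvg_pi, div_div] at hyg hab hε hεX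
  exact ⟨hyg, hab, ε, hε, hεX.1⟩
end

section
/- The auxiliary-variable problem is equivalent to the original problem: the infimum of ȳ₀ + (1/t_end)Σ_{τ=0}^{t_end−1} f(γ(τ)) over all sequences (α(t),γ(t)) with α(t) ∈ A_{ω(t)}, γ(t) ∈ X, x_m^min ≤ γ_m(t) ≤ x_m^max, satisfying ȳ_l + (1/t_end)Σ_τ g_l(γ(τ)) ≤ 0 for all l ∈ {1,…,L}, ā_k ≤ b̄_k for all k, and γ̄_m = x̄_m for all m, is equal to the infimum of ȳ₀ + f(x̄) over all sequences α(t) ∈ A_{ω(t)} satisfying ȳ_l + g_l(x̄) ≤ 0 for all l ∈ {1,…,L}, ā_k ≤ b̄_k for all k, and x̄ ∈ X. -/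
/-!
Constant auxiliary sequences `γ t = x̄` embed the original problem into the auxiliary one at the
same cost. Conversely, given a feasible pair `(α, γ)`, the average `γ̄ = x̄` lies in `X` by
convexity, and by Jensen's inequality replacing the averages of `f ∘ γ` and `g l ∘ γ` by `f γ̄` and
`g l γ̄` lowers the cost and preserves the constraints.
-/

open Finset

theorem centerMass_pi_apply {ι κ 𝕜 : Type*} {E : κ → Type*} [Field 𝕜] [∀ k, AddCommGroup (E k)]
    [∀ k, Module 𝕜 (E k)] (s : Finset ι) (w : ι → 𝕜) (z : ι → ∀ k, E k) (k : κ) :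
    s.centerMass w z k = s.centerMass w fun i ↦ z i k := by
  simp only [centerMass, Pi.smul_apply, Finset.sum_apply]

theorem centerMass_one_eq_sum_div_card {ι 𝕜 : Type*} [Field 𝕜] (s : Finset ι) (z : ι → 𝕜) :
    s.centerMass (1 : ι → 𝕜) z = (∑ i ∈ s, z i) / #s := by
  simp only [centerMass, Pi.one_apply, sum_const, nsmul_one, smul_eq_mul, one_mul,
    inv_mul_eq_div]

theorem centerMass_one_pi_eq_sum_div_card {ι κ 𝕜 : Type*} [Field 𝕜] (s : Finset ι)
    (z : ι → κ → 𝕜) : s.centerMass (1 : ι → 𝕜) z = fun k ↦ (∑ i ∈ s, z i k) / #s := by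
  ext k
  rw [centerMass_pi_apply, centerMass_one_eq_sum_div_card]

section AuxiliaryVariables

variable {T P ι 𝕜 E β : Type*} [Field 𝕜] [AddCommGroup E] [Module 𝕜 E]
  [AddCommGroup β] [Module 𝕜 β]

/-- The costs attained in the original problem: choose a policy `α` from the admissible set `D` so
that the `w`-weighted average over `s` of its trajectory `x α` lies in `X` and meets the
constraints. Time averages are the case `w = 1`. The functions `y₀` and `y l` stand for the already
averaged penalties of a policy. -/
def originalCosts [LE β] (s : Finset T) (w : T → 𝕜) (D : Set P) (X : Set E)
    (x : P → T → E) (y₀ : P → β) (y : ι → P → β) (f : E → β) (g : ι → E → β) : Set β :=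
  {c | ∃ α ∈ D, (∀ l, y l α + g l (s.centerMass w (x α)) ≤ 0) ∧ s.centerMass w (x α) ∈ X ∧
    c = y₀ α + f (s.centerMass w (x α))}

/-- The costs attained in the auxiliary problem: besides the policy `α`, choose an auxiliary
sequence `γ` in `X ∩ C` having the same average as `x α`, and average `f` and `g l` along `γ`
instead of evaluating them at the average. -/
def auxiliaryCosts [LE β] (s : Finset T) (w : T → 𝕜) (D : Set P) (X C : Set E)
    (x : P → T → E) (y₀ : P → β) (y : ι → P → β) (f : E → β) (g : ι → E → β) : Set β :=
  {c | ∃ (α : P) (γ : T → E), α ∈ D ∧ (∀ t ∈ s, γ t ∈ X) ∧ (∀ t ∈ s, γ t ∈ C) ∧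
    (∀ l, y l α + s.centerMass w (g l ∘ γ) ≤ 0) ∧ s.centerMass w γ = s.centerMass w (x α) ∧
    c = y₀ α + s.centerMass w (f ∘ γ)}

variable [LinearOrder 𝕜] [IsStrictOrderedRing 𝕜] {s : Finset T} {w : T → 𝕜} {D : Set P}
  {X C : Set E} {x : P → T → E} {f : E → β} {g : ι → E → β}

theorem originalCosts_subset_auxiliaryCosts [LE β] (hw : ∀ t ∈ s, 0 ≤ w t)
    (hw' : 0 < ∑ t ∈ s, w t) (hC : Convex 𝕜 C) (hx : ∀ α ∈ D, ∀ t ∈ s, x α t ∈ C)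
    (y₀ : P → β) (y : ι → P → β) :
    originalCosts s w D X x y₀ y f g ⊆ auxiliaryCosts s w D X C x y₀ y f g := by
  rintro _ ⟨α, hα, hg, hX, rfl⟩
  refine ⟨α, Function.const T (s.centerMass w (x α)), hα, fun _ _ ↦ hX,
    fun _ _ ↦ hC.centerMass_mem hw hw' (hx α hα), fun l ↦ ?_, centerMass_const hw'.ne' _, ?_⟩
  · rw [Function.comp_const, centerMass_const hw'.ne']
    exact hg l
  · rw [Function.comp_const, centerMass_const hw'.ne']

variable [PartialOrder β] [IsOrderedAddMonoid β] [IsStrictOrderedModule 𝕜 β]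

theorem isCoinitialFor_auxiliaryCosts_originalCosts (hw : ∀ t ∈ s, 0 ≤ w t)
    (hw' : 0 < ∑ t ∈ s, w t) (hX : Convex 𝕜 X) (hf : ConvexOn 𝕜 C f)
    (hg : ∀ l, ConvexOn 𝕜 C (g l)) (y₀ : P → β) (y : ι → P → β) :
    IsCoinitialFor (auxiliaryCosts s w D X C x y₀ y f g) (originalCosts s w D X x y₀ y f g) := by
  rintro _ ⟨α, γ, hα, hγX, hγC, hγg, hγx, rfl⟩
  have jensen {h : E → β} (hh : ConvexOn 𝕜 C h) :
      h (s.centerMass w (x α)) ≤ s.centerMass w (h ∘ γ) :=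
    hγx ▸ hh.map_centerMass_le hw hw' hγC
  have hxX : s.centerMass w (x α) ∈ X := hγx ▸ hX.centerMass_mem hw hw' hγX
  have hxg (l : ι) : y l α + g l (s.centerMass w (x α)) ≤ 0 :=
    (add_le_add_right (jensen (hg l)) _).trans (hγg l)
  exact ⟨_, ⟨α, hα, hxg, hxX, rfl⟩, add_le_add_right (jensen hf) _⟩

/-- Mutual coinitiality yields equality of the infima, and says more where the real `sInf` is only
a junk value, on sets that are empty or unbounded below. -/
theorem stmt_11_general (hw : ∀ t ∈ s, 0 ≤ w t) (hw' : 0 < ∑ t ∈ s, w t) (hX : Convex 𝕜 X)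
    (hf : ConvexOn 𝕜 C f) (hg : ∀ l, ConvexOn 𝕜 C (g l)) (hx : ∀ α ∈ D, ∀ t ∈ s, x α t ∈ C)
    (y₀ : P → β) (y : ι → P → β) :
    IsCoinitialFor (auxiliaryCosts s w D X C x y₀ y f g) (originalCosts s w D X x y₀ y f g) ∧
      IsCoinitialFor (originalCosts s w D X x y₀ y f g) (auxiliaryCosts s w D X C x y₀ y f g) :=
  ⟨isCoinitialFor_auxiliaryCosts_originalCosts hw hw' hX hf hg y₀ y,
    IsCoinitialFor.of_subset <| originalCosts_subset_auxiliaryCosts hw hw' hf.1 hx y₀ y⟩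

end AuxiliaryVariables

/-- Equivalence of the auxiliary-variable transformed problem and the original problem:
the infimum of `ȳ₀ + (1/t_end)Σ_τ f(γ(τ))` over action/auxiliary sequences satisfying
`ȳ_l + (1/t_end)Σ_τ g_l(γ(τ)) ≤ 0`, `ā_k ≤ b̄_k`, and `γ̄ = x̄`, equals the infimum of
`ȳ₀ + f(x̄)` over action sequences satisfying `ȳ_l + g_l(x̄) ≤ 0`, `ā_k ≤ b̄_k`,
and `x̄ ∈ X`. -/
theorem stmt_11
    {Ω Act : Type*} (ω : ℕ → Ω) (A : Ω → Set Act) (hAne : ∀ w, (A w).Nonempty)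
    (K M L : ℕ) (hK : 0 < K) (hM : 0 < M) (hL : 0 < L)
    (ahat bhat : Fin K → Act → Ω → ℝ) (xhat : Fin M → Act → Ω → ℝ)
    (y0hat : Act → Ω → ℝ) (yhat : Fin L → Act → Ω → ℝ)
    (amax bmax : Fin K → ℝ) (xmin xmax : Fin M → ℝ)
    (y0min y0max : ℝ) (ymin ymax : Fin L → ℝ)
    -- Assumption A1 (boundedness)
    (hA1a : ∀ (w : Ω) (a' : Act), a' ∈ A w → ∀ k, 0 ≤ ahat k a' w ∧ ahat k a' w ≤ amax k)
    (hA1b : ∀ (w : Ω) (a' : Act), a' ∈ A w → ∀ k, 0 ≤ bhat k a' w ∧ bhat k a' w ≤ bmax k)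
    (hA1x : ∀ (w : Ω) (a' : Act), a' ∈ A w → ∀ m, xmin m ≤ xhat m a' w ∧ xhat m a' w ≤ xmax m)
    (hA1y0 : ∀ (w : Ω) (a' : Act), a' ∈ A w → y0min ≤ y0hat a' w ∧ y0hat a' w ≤ y0max)
    (hA1y : ∀ (w : Ω) (a' : Act), a' ∈ A w → ∀ l, ymin l ≤ yhat l a' w ∧ yhat l a' w ≤ ymax l)
    -- the convex set X and the cost functions f, g_l on the box
    (X : Set (Fin M → ℝ)) (hX : Convex ℝ X)
    (f : (Fin M → ℝ) → ℝ) (g : Fin L → (Fin M → ℝ) → ℝ)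
    (hfconv : ConvexOn ℝ {x : Fin M → ℝ | ∀ m, xmin m ≤ x m ∧ x m ≤ xmax m} f)
    (hfcont : ContinuousOn f {x : Fin M → ℝ | ∀ m, xmin m ≤ x m ∧ x m ≤ xmax m})
    (hgconv : ∀ l, ConvexOn ℝ {x : Fin M → ℝ | ∀ m, xmin m ≤ x m ∧ x m ≤ xmax m} (g l))
    (hgcont : ∀ l, ContinuousOn (g l) {x : Fin M → ℝ | ∀ m, xmin m ≤ x m ∧ x m ≤ xmax m})
    (tend : ℕ) (htend : 0 < tend) :
    sInf {c : ℝ | ∃ (α : ℕ → Act) (γ : ℕ → Fin M → ℝ),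
        (∀ t < tend, α t ∈ A (ω t)) ∧
        (∀ t < tend, γ t ∈ X) ∧
        (∀ t < tend, ∀ m, xmin m ≤ γ t m ∧ γ t m ≤ xmax m) ∧
        (∀ l, (∑ τ ∈ Finset.range tend, yhat l (α τ) (ω τ)) / tend
            + (∑ τ ∈ Finset.range tend, g l (γ τ)) / tend ≤ 0) ∧
        (∀ k, (∑ τ ∈ Finset.range tend, ahat k (α τ) (ω τ)) / tend
            ≤ (∑ τ ∈ Finset.range tend, bhat k (α τ) (ω τ)) / tend) ∧
        (∀ m, (∑ τ ∈ Finset.range tend, γ τ m) / tend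
            = (∑ τ ∈ Finset.range tend, xhat m (α τ) (ω τ)) / tend) ∧
        c = (∑ τ ∈ Finset.range tend, y0hat (α τ) (ω τ)) / tend
            + (∑ τ ∈ Finset.range tend, f (γ τ)) / tend}
    = sInf {c : ℝ | ∃ α : ℕ → Act,
        (∀ t < tend, α t ∈ A (ω t)) ∧
        (∀ l, (∑ τ ∈ Finset.range tend, yhat l (α τ) (ω τ)) / tend
            + g l (fun m => (∑ τ ∈ Finset.range tend, xhat m (α τ) (ω τ)) / tend) ≤ 0) ∧
        (∀ k, (∑ τ ∈ Finset.range tend, ahat k (α τ) (ω τ)) / tend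
            ≤ (∑ τ ∈ Finset.range tend, bhat k (α τ) (ω τ)) / tend) ∧
        (fun m => (∑ τ ∈ Finset.range tend, xhat m (α τ) (ω τ)) / tend) ∈ X ∧
        c = (∑ τ ∈ Finset.range tend, y0hat (α τ) (ω τ)) / tend
            + f (fun m => (∑ τ ∈ Finset.range tend, xhat m (α τ) (ω τ)) / tend)} := by
  have ⟨haux, horig⟩ := stmt_11_general (s := range tend) (w := (1 : ℕ → ℝ))
    (D := {α : ℕ → Act | (∀ t < tend, α t ∈ A (ω t)) ∧
      ∀ k, (∑ τ ∈ range tend, ahat k (α τ) (ω τ)) / tend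
        ≤ (∑ τ ∈ range tend, bhat k (α τ) (ω τ)) / (tend : ℝ)})
    (x := fun α τ m ↦ xhat m (α τ) (ω τ)) (fun _ _ ↦ zero_le_one)
    (sum_pos (fun _ _ ↦ one_pos) (nonempty_range_iff.2 htend.ne')) hX hfconv hgconv
    (fun α hα t ht ↦ hA1x _ _ (hα.1 t (mem_range.1 ht)))
    (fun α ↦ (∑ τ ∈ range tend, y0hat (α τ) (ω τ)) / tend)
    (fun l α ↦ (∑ τ ∈ range tend, yhat l (α τ) (ω τ)) / tend)
  simpa only [auxiliaryCosts, originalCosts, centerMass_one_pi_eq_sum_div_card,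
    centerMass_one_eq_sum_div_card, card_range, mem_range, Set.mem_ofPred_eq, funext_iff,
    Function.comp_apply, and_assoc, and_left_comm]
    using csInf_eq_csInf_of_forall_exists_le haux horig
end

section
/- Let V ≥ 0, ν ≥ 0, A^max > 0, and let H(t), γ(t), x(t) be real sequences satisfying H(t+1) = H(t) + γ(t) − x(t), 0 ≤ x(t) ≤ A^max and 0 ≤ γ(t) ≤ A^max for all t, together with the selection rule: γ(t) = A^max whenever H(t) < 0, and γ(t) = 0 whenever H(t) > Vν. If −A^max ≤ H(0) ≤ Vν + A^max, then −A^max ≤ H(t) ≤ Vν + A^max for all t ∈ {0,1,2,…}. -/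
section OneSidedBounds

variable {G : Type*} [AddCommGroup G] [LinearOrder G] [IsOrderedAddMonoid G] {H : ℕ → G}

theorem sub_le_of_nondecreasing_below {a A : G} (hstep : ∀ t, H t - A ≤ H (t + 1))
    (hbelow : ∀ t, H t < a → H t ≤ H (t + 1)) (h0 : a - A ≤ H 0) (t : ℕ) : a - A ≤ H t := by
  induction t with
  | zero => exact h0
  | succ t ih =>
    rcases lt_or_ge (H t) a with hlt | hge
    · exact ih.trans (hbelow t hlt)
    · exact (sub_le_sub_right hge A).trans (hstep t)

theorem le_add_of_nonincreasing_above {b B : G} (hstep : ∀ t, H (t + 1) ≤ H t + B)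
    (habove : ∀ t, b < H t → H (t + 1) ≤ H t) (h0 : H 0 ≤ b + B) (t : ℕ) : H t ≤ b + B := by
  have hneg : -b - B ≤ -H t :=
    sub_le_of_nondecreasing_below (H := fun t ↦ -H t)
      (fun t ↦ by rw [← neg_add']; exact neg_le_neg (hstep t))
      (fun t ht ↦ neg_le_neg (habove t (neg_lt_neg_iff.mp ht)))
      (by rw [← neg_add']; exact neg_le_neg h0) t
  rwa [← neg_add', neg_le_neg_iff] at hneg

end OneSidedBounds

theorem stmt_13_general {G : Type*} [AddCommGroup G] [LinearOrder G] [IsOrderedAddMonoid G]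
    {a b A B : G} {H γ x : ℕ → G}
    (hrec : ∀ t, H (t + 1) = H t + γ t - x t)
    (hx : ∀ t, 0 ≤ x t ∧ x t ≤ A)
    (hγ : ∀ t, 0 ≤ γ t ∧ γ t ≤ B)
    (hbelow : ∀ t, H t < a → x t ≤ γ t)
    (habove : ∀ t, b < H t → γ t ≤ x t)
    (h0 : a - A ≤ H 0 ∧ H 0 ≤ b + B) (t : ℕ) :
    a - A ≤ H t ∧ H t ≤ b + B := by
  have hdown (t) : H t - A ≤ H (t + 1) := by
    rw [hrec]
    exact sub_le_sub (le_add_of_nonneg_right (hγ t).1) (hx t).2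
  have hup (t) : H (t + 1) ≤ H t + B := by
    rw [hrec]
    exact (sub_le_self _ (hx t).1).trans (add_le_add_right (hγ t).2 _)
  have hincr (t) (ht : H t < a) : H t ≤ H (t + 1) := by
    rw [hrec, le_sub_iff_add_le]
    exact add_le_add_right (hbelow t ht) _
  have hdecr (t) (ht : b < H t) : H (t + 1) ≤ H t := by
    rw [hrec, sub_le_iff_le_add]
    exact add_le_add_right (habove t ht) _
  exact ⟨sub_le_of_nondecreasing_below hdown hincr h0.1 t,
    le_add_of_nonincreasing_above hup hdecr h0.2 t⟩

/-- Deterministic bound on the virtual queue `H(t)` in the flow-based internet model: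
if the auxiliary variable selection rule chooses `γ(t) = A^max` whenever `H(t) < 0`
and `γ(t) = 0` whenever `H(t) > Vν`, then `H(t)` stays in `[-A^max, Vν + A^max]`. -/
theorem stmt_13 (V ν Amax : ℝ) (hV : 0 ≤ V) (hν : 0 ≤ ν) (hA : 0 < Amax)
    (H γ x : ℕ → ℝ)
    (hrec : ∀ t, H (t + 1) = H t + γ t - x t)
    (hx : ∀ t, 0 ≤ x t ∧ x t ≤ Amax)
    (hγ : ∀ t, 0 ≤ γ t ∧ γ t ≤ Amax)
    (hsel1 : ∀ t, H t < 0 → γ t = Amax)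
    (hsel2 : ∀ t, H t > V * ν → γ t = 0)
    (h0 : -Amax ≤ H 0 ∧ H 0 ≤ V * ν + Amax) :
    ∀ t, -Amax ≤ H t ∧ H t ≤ V * ν + Amax := by
  rw [← zero_sub] at h0 ⊢
  exact stmt_13_general hrec hx hγ (fun t ht ↦ (hx t).2.trans_eq (hsel1 t ht).symm)
    (fun t ht ↦ (hsel2 t ht).trans_le (hx t).1) h0
end

section
/- Let V ≥ 0, ν^max ≥ 0, A^max > 0, and let M be a positive integer. Let Z(t), A(t), C(t) be real sequences with Z(t+1) = max[Z(t) + A(t) − C(t), 0], 0 ≤ A(t) ≤ M·A^max, C(t) ≥ 0 for all t, and suppose A(t) = 0 whenever Z(t) > Vν^max + A^max. If 0 ≤ Z(0) ≤ Vν^max + (M+1)A^max, then 0 ≤ Z(t) ≤ Vν^max + (M+1)A^max for all t ∈ {0,1,2,…}. -/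
theorem max_add_zero_mem_Icc {G : Type*} [AddCommMonoid G] [LinearOrder G]
    [IsOrderedAddMonoid G] {z x θ b : G} (hz : z ∈ Set.Icc 0 (θ + b)) (hx : x ≤ b)
    (hθ : θ < z → x ≤ 0) : max (z + x) 0 ∈ Set.Icc 0 (θ + b) := by
  refine ⟨le_max_right _ _, max_le ?_ (hz.1.trans hz.2)⟩
  rcases le_or_gt z θ with hle | hgt
  · exact add_le_add hle hx
  · exact (add_le_of_nonpos_right (hθ hgt)).trans hz.2

theorem stmt_15_general {G : Type*} [AddCommGroup G] [LinearOrder G] [IsOrderedAddMonoid G]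
    {θ b : G} {Z A C : ℕ → G} (hrec : ∀ t, Z (t + 1) = max (Z t + A t - C t) 0)
    (hnet : ∀ t, A t - C t ≤ b) (hsel : ∀ t, θ < Z t → A t ≤ C t)
    (h0 : Z 0 ∈ Set.Icc 0 (θ + b)) (t : ℕ) : Z t ∈ Set.Icc 0 (θ + b) := by
  induction t with
  | zero => exact h0
  | succ t ih =>
    rw [hrec, add_sub_assoc]
    exact max_add_zero_mem_Icc ih (hnet t) fun h => sub_nonpos.mpr (hsel t h)

/-- Deterministic bound on the link virtual queue `Z_l(t)` in the flow-based internet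
model: arrivals `A(t) ≤ M·A^max` are admitted only when `Z(t) ≤ Vν^max + A^max`,
which keeps `Z(t)` in `[0, Vν^max + (M+1)A^max]`. -/
theorem stmt_15 (V νmax Amax : ℝ) (M : ℕ) (hV : 0 ≤ V) (hν : 0 ≤ νmax) (hA : 0 < Amax)
    (hM : 0 < M)
    (Z A C : ℕ → ℝ)
    (hrec : ∀ t, Z (t + 1) = max (Z t + A t - C t) 0)
    (hA' : ∀ t, 0 ≤ A t ∧ A t ≤ (M : ℝ) * Amax)
    (hC : ∀ t, 0 ≤ C t)
    (hsel : ∀ t, Z t > V * νmax + Amax → A t = 0)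
    (h0 : 0 ≤ Z 0 ∧ Z 0 ≤ V * νmax + ((M : ℝ) + 1) * Amax) :
    ∀ t, 0 ≤ Z t ∧ Z t ≤ V * νmax + ((M : ℝ) + 1) * Amax := by
  rw [show V * νmax + ((M : ℝ) + 1) * Amax = (V * νmax + Amax) + M * Amax by ring] at h0 ⊢
  exact stmt_15_general hrec (fun t => (sub_le_self _ (hC t)).trans (hA' t).2)
    (fun t h => (hsel t h).trans_le (hC t)) h0
end

section
/- Let Q^max > 0 and 0 < β ≤ Q^max, and let Q(t), a(t), b(t) be real sequences with Q(t+1) = max[Q(t) − b(t), 0] + a(t), 0 ≤ a(t) ≤ β, b(t) ≥ 0 for all t, and suppose a(t) = 0 whenever Q(t) > Q^max − β. If 0 ≤ Q(0) ≤ Q^max, then 0 ≤ Q(t) ≤ Q^max for all t ∈ {0,1,2,…}. -/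
section BoundedQueue

variable {G : Type*} [AddCommGroup G] [LinearOrder G] [IsOrderedAddMonoid G]

theorem max_sub_zero_le_self {q b : G} (hq : 0 ≤ q) (hb : 0 ≤ b) : max (q - b) 0 ≤ q :=
  max_le (sub_le_self q hb) hq

theorem add_le_of_cutoff {q a c β : G} (hq : q ≤ c) (ha : a ≤ β) (hcut : c - β < q → a ≤ 0) :
    q + a ≤ c := by
  rcases lt_or_ge (c - β) q with hfull | hroom
  · calc q + a ≤ q := add_le_of_nonpos_right (hcut hfull)
      _ ≤ c := hq
  · calc q + a ≤ (c - β) + β := add_le_add hroom ha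
      _ = c := sub_add_cancel c β

theorem stmt_16_general {Qmax β : G} {Q a b : ℕ → G}
    (hrec : ∀ t, Q (t + 1) = max (Q t - b t) 0 + a t)
    (ha : ∀ t, 0 ≤ a t ∧ a t ≤ β)
    (hb : ∀ t, 0 ≤ b t)
    (hsel : ∀ t, Qmax - β < Q t → a t = 0)
    (h0 : 0 ≤ Q 0 ∧ Q 0 ≤ Qmax) (t : ℕ) :
    0 ≤ Q t ∧ Q t ≤ Qmax := by
  induction t with
  | zero => exact h0
  | succ t ih =>
    obtain ⟨hnonneg, hle⟩ := ih
    obtain ⟨ha_nonneg, ha_le⟩ := ha t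
    rw [hrec t]
    constructor
    · exact add_nonneg (le_max_right _ _) ha_nonneg
    · calc max (Q t - b t) 0 + a t
          ≤ Q t + a t := add_le_add_left (max_sub_zero_le_self hnonneg (hb t)) (a t)
        _ ≤ Qmax := add_le_of_cutoff hle ha_le fun hfull ↦ (hsel t hfull).le

end BoundedQueue

/-- Bounded Queues Lemma (abstract form): for a queue `Q(t+1) = max[Q(t)-b(t),0] + a(t)`
whose per-slot arrivals satisfy `a(t) ≤ β` and are shut off (`a(t) = 0`) whenever
`Q(t) > Q^max - β`, the queue remains in `[0, Q^max]` for all time if initially so. -/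
theorem stmt_16 (Qmax β : ℝ) (hQmax : 0 < Qmax) (hβ : 0 < β) (hβ' : β ≤ Qmax)
    (Q a b : ℕ → ℝ)
    (hrec : ∀ t, Q (t + 1) = max (Q t - b t) 0 + a t)
    (ha : ∀ t, 0 ≤ a t ∧ a t ≤ β)
    (hb : ∀ t, 0 ≤ b t)
    (hsel : ∀ t, Q t > Qmax - β → a t = 0)
    (h0 : 0 ≤ Q 0 ∧ Q 0 ≤ Qmax) :
    ∀ t, 0 ≤ Q t ∧ Q t ≤ Qmax :=
  stmt_16_general hrec ha hb hsel h0
end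

section
/- Let 𝓘 be a nonempty set, let E be a finite index set, and let C_e : 𝓘 → ℝ (e ∈ E) be nonnegative functions with Σ_{e∈E} C_e(I) ≤ C_sum for all I ∈ 𝓘. Let W_e ≥ 0 and Ŵ_e ≥ 0 (e ∈ E) be weights with |W_e − Ŵ_e| ≤ K for all e ∈ E, where K ≥ 0. If Î ∈ 𝓘 attains the supremum of Σ_{e∈E} C_e(I)Ŵ_e over I ∈ 𝓘, then Σ_{e∈E} C_e(Î)W_e ≥ sup_{I∈𝓘} Σ_{e∈E} C_e(I)W_e − 2C_sum·K. -/
/-! Pairing with a vector of `ℓ¹` norm at most `Csum` changes by at most `Csum * K` when the weights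
move by `K` in `ℓ∞` norm, so the two objectives are uniformly close. Comparing at an arbitrary
allocation and at the maximizer costs this error twice, whence the factor `2`. -/

theorem abs_sum_mul_le_of_forall_abs_le {ι R : Type*} [Ring R] [LinearOrder R] [IsOrderedRing R]
    {s : Finset ι} {c w : ι → R} {K : R} (hw : ∀ i ∈ s, |w i| ≤ K) :
    |∑ i ∈ s, c i * w i| ≤ (∑ i ∈ s, |c i|) * K :=
  calc |∑ i ∈ s, c i * w i|
    _ ≤ ∑ i ∈ s, |c i * w i| := Finset.abs_sum_le_sum_abs _ _
    _ = ∑ i ∈ s, |c i| * |w i| := by simp only [abs_mul]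
    _ ≤ ∑ i ∈ s, |c i| * K := by gcongr with i hi; exact hw i hi
    _ = (∑ i ∈ s, |c i|) * K := (Finset.sum_mul ..).symm

theorem le_add_two_nsmul_of_isMaxOn_of_abs_sub_le {α G : Type*} [AddCommGroup G] [LinearOrder G]
    [IsOrderedAddMonoid G] {f g : α → G} {s : Set α} {x₀ x : α} {δ : G}
    (hfg : ∀ y ∈ s, |f y - g y| ≤ δ) (hmax : IsMaxOn g s x₀) (hx₀ : x₀ ∈ s) (hx : x ∈ s) :
    f x ≤ f x₀ + 2 • δ :=
  have g_le : g x₀ ≤ f x₀ + δ := sub_le_iff_le_add.mp (sub_le_of_abs_sub_le_left (hfg x₀ hx₀))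
  calc f x
    _ ≤ g x + δ := sub_le_iff_le_add'.mp (abs_le.mp (hfg x hx)).2
    _ ≤ g x₀ + δ := by gcongr; exact hmax hx
    _ ≤ f x₀ + δ + δ := by gcongr
    _ = f x₀ + 2 • δ := by rw [two_nsmul, add_assoc]

theorem stmt_17_general {I E : Type*} [Fintype E] (C : E → I → ℝ) (Csum : ℝ)
    (hCsum : ∀ i, ∑ e, |C e i| ≤ Csum) (W Wh : E → ℝ) (K : ℝ) (hK : 0 ≤ K)
    (hclose : ∀ e, |W e - Wh e| ≤ K) (Ihat : I)
    (hIhat : ∀ i, ∑ e, C e i * Wh e ≤ ∑ e, C e Ihat * Wh e) :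
    ∑ e, C e Ihat * W e ≥ sSup (Set.range fun i => ∑ e, C e i * W e) - 2 * Csum * K := by
  have objectives_close (i : I) : |∑ e, C e i * W e - ∑ e, C e i * Wh e| ≤ Csum * K :=
    calc |∑ e, C e i * W e - ∑ e, C e i * Wh e|
      _ = |∑ e, C e i * (W e - Wh e)| := by simp only [mul_sub, Finset.sum_sub_distrib]
      _ ≤ (∑ e, |C e i|) * K := abs_sum_mul_le_of_forall_abs_le fun e _ => hclose e
      _ ≤ Csum * K := by gcongr; exact hCsum i
  have le_at_Ihat (i : I) : ∑ e, C e i * W e ≤ ∑ e, C e Ihat * W e + 2 * Csum * K := by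
    simpa only [nsmul_eq_mul, Nat.cast_ofNat, ← mul_assoc] using
      le_add_two_nsmul_of_isMaxOn_of_abs_sub_le (f := fun j => ∑ e, C e j * W e)
        (g := fun j => ∑ e, C e j * Wh e) (fun j _ => objectives_close j) (fun j _ => hIhat j)
        (Set.mem_univ Ihat) (Set.mem_univ i)
  exact sub_le_iff_le_add.mpr (csSup_le ⟨_, Ihat, rfl⟩ (Set.forall_mem_range.mpr le_at_Ihat))

/-- Abstract core of the `C`-approximation lemma for max-weight scheduling with
perturbed weights: if `Î` maximizes the perturbed-weight objective `Σ_e C_e(I)Ŵ_e`,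
and the true and perturbed weights differ entrywise by at most `K`, then the
true-weight objective at `Î` is within `2·C_sum·K` of its supremum. -/
theorem stmt_17 {I E : Type*} [Nonempty I] [Fintype E]
    (C : E → I → ℝ) (Csum : ℝ)
    (hC : ∀ e i, 0 ≤ C e i)
    (hCsum : ∀ i, ∑ e, C e i ≤ Csum)
    (W Wh : E → ℝ) (K : ℝ) (hK : 0 ≤ K)
    (hW : ∀ e, 0 ≤ W e) (hWh : ∀ e, 0 ≤ Wh e)
    (hclose : ∀ e, |W e - Wh e| ≤ K)
    (Ihat : I)
    (hIhat : ∀ i, ∑ e, C e i * Wh e ≤ ∑ e, C e Ihat * Wh e) :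
    ∑ e, C e Ihat * W e ≥ sSup (Set.range fun i => ∑ e, C e i * W e) - 2 * Csum * K := by
  have sum_abs_le (i : I) : ∑ e, |C e i| ≤ Csum := by
    simpa only [abs_of_nonneg (hC _ i)] using hCsum i
  exact stmt_17_general C Csum sum_abs_le W Wh K hK hclose Ihat hIhat
end
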